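/- arXiv:2411.07471 — 2 statements merged into one kernel-verified Lean document; each statement's English description precedes it below -/
import Mathlib

section
/- Let φ be a real number with 0 < φ < π/2 and set t = tan φ. Then the point A = (1/(1+t), t/(1+t)) lies on the unit taxicab circle (|1/(1+t)| + |t/(1+t)| = 1), A lies on the ray from the origin making Euclidean angle φ with the positive x-axis (i.e. A = s·(cos φ, sin φ) for some s > 0), and the taxicab distance from (1, 0) to A equals 2 − 2/(1 + t). Consequently, an acute Euclidean angle φ in standard position has taxicab measure 2 − 2/(1 + tan φ) t-radians. -/
noncomputable def taxiDist (P Q : ℝ × ℝ) : ℝ := |P.1 - Q.1| + |P.2 - Q.2|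

/-!
Dividing through by `cos φ` shows that `A` is the direction `(cos φ, sin φ)` rescaled by the
positive factor `1 / (cos φ + sin φ)`, which puts it on the side `x + y = 1` of the taxicab circle.
Along such a side horizontal and vertical displacements have equal length, so the distance from
`(1, 0)` to `A` is twice the horizontal displacement `1 - 1 / (1 + tan φ)`.
-/

theorem taxiDist_eq_two_mul_abs_fst_sub_fst {P Q : ℝ × ℝ} (h : P.1 + P.2 = Q.1 + Q.2) :
    taxiDist P Q = 2 * |P.1 - Q.1| := by
  have snd_sub : P.2 - Q.2 = -(P.1 - Q.1) := by linarith
  rw [taxiDist, snd_sub, abs_neg, two_mul]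

theorem abs_div_add_add_abs_div_add {K : Type*} [Field K] [LinearOrder K] [IsStrictOrderedRing K]
    {a b : K} (hab : 0 ≤ a * b) (h : a + b ≠ 0) : |a / (a + b)| + |b / (a + b)| = 1 := by
  have abs_add_eq : |a + b| = |a| + |b| := (abs_add_eq_add_abs_iff a b).2 (mul_nonneg_iff.1 hab)
  rw [abs_div, abs_div, ← add_div, ← abs_add_eq, div_self (abs_ne_zero.2 h)]

theorem one_div_one_add_tan {φ : ℝ} (h : Real.cos φ ≠ 0) :
    1 / (1 + Real.tan φ) = Real.cos φ / (Real.cos φ + Real.sin φ) := by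
  rw [Real.tan_eq_sin_div_cos, one_add_div h, one_div_div]

theorem tan_div_one_add_tan {φ : ℝ} (h : Real.cos φ ≠ 0) :
    Real.tan φ / (1 + Real.tan φ) = Real.sin φ / (Real.cos φ + Real.sin φ) := by
  rw [Real.tan_eq_sin_div_cos, one_add_div h, div_div_div_cancel_right₀ h]

theorem acute_angle_taxicab_measure (φ : ℝ) (hφ0 : 0 < φ) (hφ : φ < Real.pi / 2) :
    |1 / (1 + Real.tan φ)| + |Real.tan φ / (1 + Real.tan φ)| = 1 ∧
    (∃ s : ℝ, 0 < s ∧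
      ((1 / (1 + Real.tan φ), Real.tan φ / (1 + Real.tan φ)) : ℝ × ℝ) =
        (s * Real.cos φ, s * Real.sin φ)) ∧
    taxiDist ((1, 0) : ℝ × ℝ)
        ((1 / (1 + Real.tan φ), Real.tan φ / (1 + Real.tan φ)) : ℝ × ℝ) =
      2 - 2 / (1 + Real.tan φ) := by
  have cos_pos : 0 < Real.cos φ := Real.cos_pos_of_mem_Ioo ⟨by linarith, hφ⟩
  have sin_pos : 0 < Real.sin φ := Real.sin_pos_of_pos_of_lt_pi hφ0 (by linarith)
  have tan_pos : 0 < Real.tan φ := Real.tan_pos_of_pos_of_lt_pi_div_two hφ0 hφ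
  have one_add_tan_pos : 0 < 1 + Real.tan φ := by positivity
  refine ⟨abs_div_add_add_abs_div_add (by positivity) one_add_tan_pos.ne',
    ⟨(Real.cos φ + Real.sin φ)⁻¹, by positivity, ?_⟩, ?_⟩
  · rw [one_div_one_add_tan cos_pos.ne', tan_div_one_add_tan cos_pos.ne', div_eq_inv_mul,
      div_eq_inv_mul]
  · have same_side : (1 : ℝ) + 0 = 1 / (1 + Real.tan φ) + Real.tan φ / (1 + Real.tan φ) := by
      rw [← add_div, div_self one_add_tan_pos.ne', add_zero]
    have fst_le_one : 1 / (1 + Real.tan φ) ≤ 1 :=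
      (div_le_one one_add_tan_pos).2 (by linarith)
    rw [taxiDist_eq_two_mul_abs_fst_sub_fst same_side, abs_of_nonneg (sub_nonneg.2 fst_le_one)]
    ring
end

section
/- (Proposition I.5T, case 2: base vertices in adjacent quadrants) Let r > 0 and let x₀, y₀, x₁, y₁ be reals with x₀ > 0, x₁ > 0, y₀ ≥ y₁ ≥ 0, x₁ ≥ x₀, x₀ + y₀ = r and x₁ + y₁ = r, and let P = (x₀, y₀) lie in the first quadrant and Q = (−x₁, y₁) in the second quadrant. Set α := 2/(1 + (y₀ − y₁)/(x₀ + x₁)) − 2/(1 + y₀/x₀) and β := 4 − 2/(1 + y₁/x₁) − 2/(1 + (y₀ − y₁)/(x₀ + x₁)) (the taxicab measures of the base angles ∠QPO and ∠PQO). Then α = β if and only if y₁ = 0 or x₀ = x₁; moreover x₀ = x₁ if and only if y₀ = y₁. -/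
/-!
On the taxicab circle `x + y = r` a first-quadrant ray through `(x, y)` has taxicab measure
`2 * y / r`, and the line `PQ` has taxicab measure `(y₀ - y₁) / x₁`. Hence `α - β` equals
`2 * y₁ * (x₀ - x₁) / (r * x₁)`, whose numerator shows when the base angles agree.
-/

section TRadians

variable {K : Type*} [Field K] {r x y x₀ y₀ x₁ y₁ : K}

/-- The `t`-radian conversion formula: the taxicab measure of an acute angle in standard position,
as a function of its Euclidean tangent `m`. At `m = -1` division by zero gives the junk
value `2`. -/
def tRadians (m : K) : K :=
  2 - 2 / (1 + m)

theorem tRadians_div (hx : x ≠ 0) (hxy : x + y ≠ 0) :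
    tRadians (y / x) = 2 * y / (x + y) := by
  rw [tRadians, one_add_div hx]
  field_simp
  ring

theorem tRadians_chord_slope [NeZero (2 : K)] (hx : x₀ + x₁ ≠ 0) (hx₁ : x₁ ≠ 0)
    (h : x₀ + y₀ = x₁ + y₁) :
    tRadians ((y₀ - y₁) / (x₀ + x₁)) = (y₀ - y₁) / x₁ := by
  have two_ne : (2 : K) ≠ 0 := two_ne_zero
  have denom : x₀ + x₁ + (y₀ - y₁) = 2 * x₁ := by linear_combination h
  rw [tRadians_div hx (denom ▸ mul_ne_zero two_ne hx₁), denom, mul_div_mul_left _ _ two_ne]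

theorem tRadians_baseAngle_sub [NeZero (2 : K)] (hr : r ≠ 0) (hx₀ : x₀ ≠ 0) (hx₁ : x₁ ≠ 0)
    (hx : x₀ + x₁ ≠ 0) (h₀ : x₀ + y₀ = r) (h₁ : x₁ + y₁ = r) :
    (tRadians (y₀ / x₀) - tRadians ((y₀ - y₁) / (x₀ + x₁))) -
        (tRadians (y₁ / x₁) + tRadians ((y₀ - y₁) / (x₀ + x₁))) =
      2 * (y₁ * (x₀ - x₁)) / (r * x₁) := by
  have ray₀ : tRadians (y₀ / x₀) = 2 * y₀ / r := by rw [tRadians_div hx₀ (h₀ ▸ hr), h₀]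
  have ray₁ : tRadians (y₁ / x₁) = 2 * y₁ / r := by rw [tRadians_div hx₁ (h₁ ▸ hr), h₁]
  rw [ray₀, ray₁, tRadians_chord_slope hx hx₁ (h₀.trans h₁.symm)]
  obtain rfl : y₀ = r - x₀ := eq_sub_of_add_eq' h₀
  obtain rfl : y₁ = r - x₁ := eq_sub_of_add_eq' h₁
  field_simp
  ring

theorem i5t_case2_general [NeZero (2 : K)] (hr : r ≠ 0) (hx₀ : x₀ ≠ 0) (hx₁ : x₁ ≠ 0)
    (hx : x₀ + x₁ ≠ 0) (h₀ : x₀ + y₀ = r) (h₁ : x₁ + y₁ = r) :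
    ((2 / (1 + (y₀ - y₁) / (x₀ + x₁)) - 2 / (1 + y₀ / x₀) =
        4 - 2 / (1 + y₁ / x₁) - 2 / (1 + (y₀ - y₁) / (x₀ + x₁))) ↔
      (y₁ = 0 ∨ x₀ = x₁)) ∧
    (x₀ = x₁ ↔ y₀ = y₁) := by
  have angle_sub : (2 / (1 + (y₀ - y₁) / (x₀ + x₁)) - 2 / (1 + y₀ / x₀)) -
      (4 - 2 / (1 + y₁ / x₁) - 2 / (1 + (y₀ - y₁) / (x₀ + x₁))) =
      2 * (y₁ * (x₀ - x₁)) / (r * x₁) := by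
    rw [← tRadians_baseAngle_sub hr hx₀ hx₁ hx h₀ h₁]
    simp only [tRadians]
    ring
  constructor
  · rw [← sub_eq_zero, angle_sub, div_eq_zero_iff, or_iff_left (mul_ne_zero hr hx₁),
      mul_eq_zero_iff_left two_ne_zero, mul_eq_zero, sub_eq_zero]
  · exact ⟨fun h => by linear_combination h₀ - h₁ - h, fun h => by linear_combination h₀ - h₁ - h⟩

end TRadians

theorem i5t_case2 (r x₀ y₀ x₁ y₁ : ℝ) (hr : 0 < r)
    (hx₀ : 0 < x₀) (hx₁ : 0 < x₁) (hy₁ : 0 ≤ y₁) (hy : y₁ ≤ y₀)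
    (hx : x₀ ≤ x₁) (hQ : x₀ + y₀ = r) (hP : x₁ + y₁ = r) :
    ((2 / (1 + (y₀ - y₁) / (x₀ + x₁)) - 2 / (1 + y₀ / x₀) =
        4 - 2 / (1 + y₁ / x₁) - 2 / (1 + (y₀ - y₁) / (x₀ + x₁))) ↔
      (y₁ = 0 ∨ x₀ = x₁)) ∧
    (x₀ = x₁ ↔ y₀ = y₁) :=
  i5t_case2_general hr.ne' hx₀.ne' hx₁.ne' (add_pos hx₀ hx₁).ne' hQ hP
end
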